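/- Let F be a heavy-tailed distribution on [0,∞). If for some c ∈ (0,∞), ∫_0^x F̄(x−y) F̄(y) dy ~ c F̄(x) as x → ∞, then F has finite mean a and F belongs to the class S*, i.e., ∫_0^x F̄(x−y) F̄(y) dy ~ 2a F̄(x). -/

import Mathlib

open MeasureTheory Filter Real Set
open scoped ENNReal Topology

noncomputable section

/-- Convolution of two measures on ℝ: distribution of the sum of independent r.v.'s. -/
def mconv (μ ν : MeasureTheory.Measure ℝ) : MeasureTheory.Measure ℝ :=
  MeasureTheory.Measure.map (fun p : ℝ × ℝ => p.1 + p.2) (μ.prod ν)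

/-- The tail F̄(x) = F(x,∞). -/
def tail (F : MeasureTheory.Measure ℝ) (x : ℝ) : ℝ≥0∞ := F (Set.Ioi x)

/-- Laplace transform φ(γ) = ∫ e^{γx} F(dx), with value in [0,∞]. -/
def phi (F : MeasureTheory.Measure ℝ) (γ : ℝ) : ℝ≥0∞ :=
  ∫⁻ x, ENNReal.ofReal (Real.exp (γ * x)) ∂F

/-- F is heavy-tailed: φ(γ) = ∞ for every γ > 0. -/
def IsHeavyTailed (F : MeasureTheory.Measure ℝ) : Prop :=
  ∀ γ : ℝ, 0 < γ → phi F γ = ⊤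

/-- γ̂ = sup{γ : φ(γ) < ∞} ∈ [0,∞] (for distributions on [0,∞)). -/
def gammaHat (F : MeasureTheory.Measure ℝ) : ℝ≥0∞ :=
  sSup {p : ℝ≥0∞ | ∃ γ : ℝ, p = ENNReal.ofReal γ ∧ phi F γ < ⊤}

/-- φ(γ̂) = lim_{γ↑γ̂} φ(γ), realized (by monotonicity of φ) as sup over γ < γ̂. -/
def phiHat (F : MeasureTheory.Measure ℝ) : ℝ≥0∞ :=
  ⨆ (γ : ℝ) (_ : ENNReal.ofReal γ < gammaHat F ∨ γ < 0), phi F γ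

/-!
Let `μ` be the measure with density `F̄` on `(0, ∞)`; the integral in the theorem is the density of
`μ ∗ μ`. Bounding `F̄ (x - y)` below by `F̄ x` on each half of `[0, x]` shows that the lower limit of
the ratio is at least `2 μ(ℝ)`.

For the converse suppose `r F̄` is eventually below the density of `μ ∗ μ`. If `w` is
submultiplicative and `m` is subadditive, integrating `m w` gives
`r ∫ m w ∂μ ≤ O(1) + 2 (∫ w ∂μ) (∫ m w ∂μ)`. As `μ` is heavy-tailed, for each `s > μ(ℝ)` and each
small `γ > 0` some weight `w x = exp (min (γ x) T)` has `∫ w ∂μ = s`, and for `γ → 0` the excess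
`s - μ(ℝ)` is carried by arbitrarily large `x`. With `m x = min x R` the integral `∫ m w ∂μ` then
grows without bound as `R → ∞`, while the `O(1)` term does not change, so `r ≤ 2 s`.
-/

open scoped NNReal

/-- The integrated tail of `F`, the measure on `(0, ∞)` with density `F̄`. It is not normalized to a
probability measure, so that its total mass `a` may be infinite. -/
def integratedTail (F : Measure ℝ) : Measure ℝ :=
  (volume.restrict (Ioi 0)).withDensity (tail F)

/-- The integral of `F̄` against its reflection on `[0, x]`, whose ratio to `F̄ x` enters the
definition of the class `S*`. -/
def tailConv (F : Measure ℝ) (x : ℝ) : ℝ≥0∞ :=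
  ∫⁻ y in Ioc 0 x, tail F (x - y) * tail F y

/-- The bounded submultiplicative weight `x ↦ exp (min (γ x) T)`, which replaces the exponential
`exp (γ x)` where the latter is not integrable. -/
def truncExp (γ T x : ℝ) : ℝ≥0∞ := ENNReal.ofReal (exp (min (γ * x) T))

lemma min_add_le_min_add_min {α : Type*} [AddCommMonoid α] [LinearOrder α] [IsOrderedAddMonoid α]
    {x y t : α} (hx : 0 ≤ x) (hy : 0 ≤ y) (ht : 0 ≤ t) :
    min (x + y) t ≤ min x t + min y t := by
  rcases le_total t x with htx | hxt
  · calc min (x + y) t ≤ t := min_le_right _ _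
      _ ≤ min x t + min y t := by
        rw [min_eq_right htx]
        exact le_add_of_nonneg_right (le_min hy ht)
  rcases le_total t y with hty | hyt
  · calc min (x + y) t ≤ t := min_le_right _ _
      _ ≤ min x t + min y t := by
        rw [min_eq_right hty]
        exact le_add_of_nonneg_left (le_min hx ht)
  · rw [min_eq_left hxt, min_eq_left hyt]
    exact min_le_left _ _

section TruncExp

variable {γ T : ℝ}

@[fun_prop]
lemma measurable_truncExp : Measurable (truncExp γ T) := by
  unfold truncExp
  fun_prop

lemma truncExp_le_exp_mul (x : ℝ) : truncExp γ T x ≤ ENNReal.ofReal (exp (γ * x)) := by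
  unfold truncExp
  gcongr
  exact min_le_left _ _

lemma truncExp_le_exp (x : ℝ) : truncExp γ T x ≤ ENNReal.ofReal (exp T) := by
  unfold truncExp
  gcongr
  exact min_le_right _ _

lemma monotone_truncExp (γ x : ℝ) : Monotone fun T => truncExp γ T x := by
  intro S T hST
  simp only [truncExp]
  gcongr

lemma continuous_truncExp (γ x : ℝ) : Continuous fun T => truncExp γ T x :=
  ENNReal.continuous_ofReal.comp (by fun_prop)

lemma truncExp_zero {x : ℝ} (hγ : 0 ≤ γ) (hx : 0 ≤ x) : truncExp γ 0 x = 1 := by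
  simp [truncExp, mul_nonneg hγ hx]

lemma truncExp_add_le {x y : ℝ} (hγ : 0 ≤ γ) (hT : 0 ≤ T) (hx : 0 ≤ x) (hy : 0 ≤ y) :
    truncExp γ T (x + y) ≤ truncExp γ T x * truncExp γ T y := by
  unfold truncExp
  rw [← ENNReal.ofReal_mul (exp_pos _).le, ← exp_add, mul_add]
  gcongr
  exact min_add_le_min_add_min (mul_nonneg hγ hx) (mul_nonneg hγ hy) hT

end TruncExp

section Conv

variable {M : Type*} [AddMonoid M] [MeasurableSpace M] [MeasurableAdd₂ M] {μ : Measure M}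
  [SFinite μ] {s : Set M} {m w : M → ℝ≥0∞}

lemma lintegral_mul_conv_le (hs : ∀ᵐ x ∂μ, x ∈ s) (hm : Measurable m) (hw : Measurable w)
    (hm_add : ∀ x ∈ s, ∀ y ∈ s, m (x + y) ≤ m x + m y)
    (hw_add : ∀ x ∈ s, ∀ y ∈ s, w (x + y) ≤ w x * w y) :
    ∫⁻ x, m x * w x ∂(μ ∗ μ) ≤ 2 * (∫⁻ x, w x ∂μ) * ∫⁻ x, m x * w x ∂μ := by
  rw [Measure.lintegral_conv (by fun_prop)]
  calc ∫⁻ x, ∫⁻ y, m (x + y) * w (x + y) ∂μ ∂μ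
      ≤ ∫⁻ x, ∫⁻ y, (m x * w x * w y + w x * (m y * w y)) ∂μ ∂μ := by
        refine lintegral_mono_ae (hs.mono fun x hx => lintegral_mono_ae (hs.mono fun y hy => ?_))
        calc m (x + y) * w (x + y) ≤ (m x + m y) * (w x * w y) :=
              mul_le_mul' (hm_add x hx y hy) (hw_add x hx y hy)
          _ = m x * w x * w y + w x * (m y * w y) := by ring
    _ = ∫⁻ x, (m x * w x * (∫⁻ y, w y ∂μ) + w x * ∫⁻ y, m y * w y ∂μ) ∂μ := by
        refine lintegral_congr fun x => ?_
        rw [lintegral_add_left (by fun_prop), lintegral_const_mul _ hw,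
          lintegral_const_mul _ (by fun_prop)]
    _ = 2 * (∫⁻ x, w x ∂μ) * ∫⁻ x, m x * w x ∂μ := by
        rw [lintegral_add_left (by fun_prop), lintegral_mul_const _ (by fun_prop),
          lintegral_mul_const _ hw]
        ring

lemma mul_lintegral_le_of_smul_restrict_compl_le_conv (hs : ∀ᵐ x ∂μ, x ∈ s) (hm : Measurable m)
    (hw : Measurable w) (hm_add : ∀ x ∈ s, ∀ y ∈ s, m (x + y) ≤ m x + m y)
    (hw_add : ∀ x ∈ s, ∀ y ∈ s, w (x + y) ≤ w x * w y) {t : Set M} (ht : MeasurableSet t)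
    {b r : ℝ≥0∞} (hmb : ∀ x ∈ t, m x ≤ b) (hconv : r • μ.restrict tᶜ ≤ μ ∗ μ) :
    r * ∫⁻ x, m x * w x ∂μ ≤
      r * (b * ∫⁻ x, w x ∂μ) + 2 * (∫⁻ x, w x ∂μ) * ∫⁻ x, m x * w x ∂μ := by
  have h_on : ∫⁻ x in t, m x * w x ∂μ ≤ b * ∫⁻ x, w x ∂μ :=
    calc ∫⁻ x in t, m x * w x ∂μ
        ≤ ∫⁻ x in t, b * w x ∂μ :=
          setLIntegral_mono (by fun_prop) fun x hx => mul_le_mul_left (hmb x hx) _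
      _ ≤ ∫⁻ x, b * w x ∂μ := setLIntegral_le_lintegral _ _
      _ = b * ∫⁻ x, w x ∂μ := lintegral_const_mul _ hw
  have h_off : r * ∫⁻ x in tᶜ, m x * w x ∂μ ≤ 2 * (∫⁻ x, w x ∂μ) * ∫⁻ x, m x * w x ∂μ :=
    calc r * ∫⁻ x in tᶜ, m x * w x ∂μ
        = ∫⁻ x, m x * w x ∂(r • μ.restrict tᶜ) := by rw [lintegral_smul_measure, smul_eq_mul]
      _ ≤ ∫⁻ x, m x * w x ∂(μ ∗ μ) := lintegral_mono' hconv le_rfl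
      _ ≤ 2 * (∫⁻ x, w x ∂μ) * ∫⁻ x, m x * w x ∂μ := lintegral_mul_conv_le hs hm hw hm_add hw_add
  calc r * ∫⁻ x, m x * w x ∂μ
      = r * ∫⁻ x in t, m x * w x ∂μ + r * ∫⁻ x in tᶜ, m x * w x ∂μ := by
        rw [← mul_add, lintegral_add_compl _ ht]
    _ ≤ _ := by gcongr

end Conv

section MinWeight

variable {μ : Measure ℝ} {w : ℝ → ℝ≥0∞} (hw : Measurable w) (R : ℝ)
include hw

lemma ofReal_mul_setLIntegral_Ioi_le :
    ENNReal.ofReal R * ∫⁻ x in Ioi R, w x ∂μ ≤ ∫⁻ x, ENNReal.ofReal (min x R) * w x ∂μ := by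
  rw [← lintegral_const_mul _ hw]
  calc ∫⁻ x in Ioi R, ENNReal.ofReal R * w x ∂μ
      = ∫⁻ x in Ioi R, ENNReal.ofReal (min x R) * w x ∂μ :=
        setLIntegral_congr_fun measurableSet_Ioi fun x hx => by
          rw [min_eq_right (le_of_lt hx)]
    _ ≤ ∫⁻ x, ENNReal.ofReal (min x R) * w x ∂μ := setLIntegral_le_lintegral _ _

lemma lintegral_ofReal_min_mul_le :
    ∫⁻ x, ENNReal.ofReal (min x R) * w x ∂μ ≤ ENNReal.ofReal R * ∫⁻ x, w x ∂μ := by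
  rw [← lintegral_const_mul _ hw]
  refine lintegral_mono fun x => ?_
  gcongr
  exact min_le_right _ _

end MinWeight

lemma iSup_lintegral_truncExp (μ : Measure ℝ) (γ : ℝ) :
    ⨆ n : ℕ, ∫⁻ x, truncExp γ n x ∂μ = phi μ γ := by
  rw [← lintegral_iSup (fun _ => measurable_truncExp)
    fun m n hmn x => monotone_truncExp γ x (Nat.cast_le.2 hmn)]
  refine lintegral_congr fun x => le_antisymm (iSup_le fun n => truncExp_le_exp_mul x) ?_
  obtain ⟨n, hn⟩ := exists_nat_ge (γ * x)
  exact le_iSup_of_le n (by rw [truncExp, min_eq_left hn])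

section HeavyTailed

variable {μ : Measure ℝ} [IsFiniteMeasure μ]

lemma continuous_lintegral_truncExp (γ : ℝ) : Continuous fun T => ∫⁻ x, truncExp γ T x ∂μ := by
  refine continuous_iff_continuousAt.2 fun T => ?_
  refine tendsto_lintegral_filter_of_dominated_convergence
    (fun _ => ENNReal.ofReal (exp (T + 1))) (.of_forall fun _ => by fun_prop) ?_ ?_
    (.of_forall fun x => (continuous_truncExp γ x).tendsto T)
  · filter_upwards [eventually_le_nhds (lt_add_one T)] with S hS
    exact .of_forall fun x => (truncExp_le_exp x).trans (by gcongr)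
  · rw [lintegral_const]
    finiteness

lemma exists_lintegral_truncExp_eq (hnonneg : ∀ᵐ x ∂μ, 0 ≤ x) {γ : ℝ} (hγ : 0 ≤ γ)
    (hphi : phi μ γ = ⊤) {s : ℝ≥0∞} (hμs : μ univ ≤ s) (hs : s ≠ ⊤) :
    ∃ T, 0 ≤ T ∧ ∫⁻ x, truncExp γ T x ∂μ = s := by
  have h_zero : ∫⁻ x, truncExp γ 0 x ∂μ ≤ s := by
    rwa [lintegral_congr_ae (hnonneg.mono fun x hx => truncExp_zero hγ hx), lintegral_one]
  obtain ⟨n, hn⟩ : ∃ n : ℕ, s < ∫⁻ x, truncExp γ n x ∂μ := by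
    rw [← lt_iSup_iff, iSup_lintegral_truncExp, hphi]
    exact hs.lt_top
  obtain ⟨T, hT, hTs⟩ := intermediate_value_Icc n.cast_nonneg
    (continuous_lintegral_truncExp γ).continuousOn ⟨h_zero, hn.le⟩
  exact ⟨T, hT.1, hTs⟩

lemma exists_pos_exp_mul_measure_univ_lt (R : ℝ) {t : ℝ≥0∞} (hμt : μ univ < t) :
    ∃ γ, 0 < γ ∧ ENNReal.ofReal (exp (γ * R)) * μ univ < t := by
  have h_cont : ContinuousAt (fun γ => ENNReal.ofReal (exp (γ * R)) * μ univ) 0 :=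
    ENNReal.Tendsto.mul_const (ENNReal.tendsto_ofReal (Continuous.tendsto (by fun_prop) 0))
      (.inr (measure_ne_top _ _))
  have h_near : ∀ᶠ γ in 𝓝[>] (0 : ℝ), ENNReal.ofReal (exp (γ * R)) * μ univ < t :=
    nhdsWithin_le_nhds (h_cont.eventually_lt_const (by simpa using hμt))
  exact (eventually_mem_nhdsWithin.and h_near).exists

lemma exists_truncExp_mass_Ioi (hnonneg : ∀ᵐ x ∂μ, 0 ≤ x) (hheavy : IsHeavyTailed μ)
    (R : ℝ) {s t : ℝ≥0∞} (hμt : μ univ < t) (hts : t ≤ s) (hs : s ≠ ⊤) :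
    ∃ γ T, 0 ≤ γ ∧ 0 ≤ T ∧ ∫⁻ x, truncExp γ T x ∂μ = s ∧
      s - t ≤ ∫⁻ x in Ioi R, truncExp γ T x ∂μ := by
  obtain ⟨γ, hγ, hγt⟩ := exists_pos_exp_mul_measure_univ_lt R hμt
  obtain ⟨T, hT, hTs⟩ :=
    exists_lintegral_truncExp_eq hnonneg hγ.le (hheavy γ hγ) (hμt.le.trans hts) hs
  have h_Iic : ∫⁻ x in Iic R, truncExp γ T x ∂μ ≤ t :=
    calc ∫⁻ x in Iic R, truncExp γ T x ∂μ
        ≤ ∫⁻ _ in Iic R, ENNReal.ofReal (exp (γ * R)) ∂μ := by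
          refine setLIntegral_mono measurable_const fun x hx => (truncExp_le_exp_mul x).trans ?_
          gcongr
          exact hx
      _ = ENNReal.ofReal (exp (γ * R)) * μ (Iic R) := setLIntegral_const _ _
      _ ≤ ENNReal.ofReal (exp (γ * R)) * μ univ := by gcongr; exact subset_univ _
      _ ≤ t := hγt.le
  refine ⟨γ, T, hγ.le, hT, hTs, tsub_le_iff_left.2 ?_⟩
  calc s = ∫⁻ x in Iic R, truncExp γ T x ∂μ + ∫⁻ x in Ioi R, truncExp γ T x ∂μ := by
        rw [← compl_Iic, lintegral_add_compl _ measurableSet_Iic, hTs]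
    _ ≤ t + ∫⁻ x in Ioi R, truncExp γ T x ∂μ := by gcongr

lemma ofReal_mul_tsub_mul_tsub_le (hnonneg : ∀ᵐ x ∂μ, 0 ≤ x) (hheavy : IsHeavyTailed μ)
    {r : ℝ≥0∞} {x₀ : ℝ} (hconv : r • μ.restrict (Ioi x₀) ≤ μ ∗ μ) {s t : ℝ≥0∞}
    (hμt : μ univ < t) (hts : t ≤ s) (hs : s ≠ ⊤) {R : ℝ} (hR : 0 ≤ R) :
    ENNReal.ofReal R * ((r - 2 * s) * (s - t)) ≤ r * (ENNReal.ofReal x₀ * s) := by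
  obtain ⟨γ, T, hγ, hT, h_mass, h_mass_Ioi⟩ :=
    exists_truncExp_mass_Ioi hnonneg hheavy R hμt hts hs
  set K := ∫⁻ x, ENNReal.ofReal (min x R) * truncExp γ T x ∂μ with hK
  have hK_lower : ENNReal.ofReal R * (s - t) ≤ K :=
    (mul_le_mul_right h_mass_Ioi _).trans (ofReal_mul_setLIntegral_Ioi_le measurable_truncExp R)
  have hK_ne_top : K ≠ ⊤ := by
    refine ne_top_of_le_ne_top ?_ (lintegral_ofReal_min_mul_le measurable_truncExp R)
    rw [h_mass]
    exact ENNReal.mul_ne_top ENNReal.ofReal_ne_top hs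
  have hK_conv : r * K ≤ r * (ENNReal.ofReal x₀ * s) + 2 * s * K := by
    rw [hK, ← h_mass]
    refine mul_lintegral_le_of_smul_restrict_compl_le_conv (s := Ici 0) hnonneg (by fun_prop)
      measurable_truncExp (fun x hx y hy => ?_) (fun x hx y hy => truncExp_add_le hγ hT hx hy)
      measurableSet_Iic (fun x hx => ENNReal.ofReal_le_ofReal ((min_le_left _ _).trans hx))
      (by rwa [compl_Iic])
    rw [← ENNReal.ofReal_add (le_min hx hR) (le_min hy hR)]
    exact ENNReal.ofReal_le_ofReal (min_add_le_min_add_min hx hy hR)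
  calc ENNReal.ofReal R * ((r - 2 * s) * (s - t))
      = (r - 2 * s) * (ENNReal.ofReal R * (s - t)) := mul_left_comm _ _ _
    _ ≤ (r - 2 * s) * K := by gcongr
    _ = r * K - 2 * s * K := ENNReal.sub_mul fun _ _ => hK_ne_top
    _ ≤ r * (ENNReal.ofReal x₀ * s) := tsub_le_iff_right.2 hK_conv

lemma le_two_mul_of_measure_univ_lt (hnonneg : ∀ᵐ x ∂μ, 0 ≤ x) (hheavy : IsHeavyTailed μ)
    {r : ℝ≥0} {x₀ : ℝ} (hconv : (r : ℝ≥0∞) • μ.restrict (Ioi x₀) ≤ μ ∗ μ) {s : ℝ≥0∞}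
    (hμs : μ univ < s) (hs : s ≠ ⊤) : r ≤ 2 * s := by
  by_contra! h_lt
  obtain ⟨t, hμt, hts⟩ := exists_between hμs
  obtain ⟨n, hn⟩ := ENNReal.exists_nat_mul_gt (b := r * (ENNReal.ofReal x₀ * s))
    (mul_ne_zero (tsub_pos_of_lt h_lt).ne' (tsub_pos_of_lt hts).ne') (by finiteness)
  rw [← ENNReal.ofReal_natCast] at hn
  exact hn.not_ge (ofReal_mul_tsub_mul_tsub_le hnonneg hheavy hconv hμt hts.le hs n.cast_nonneg)

theorem le_two_mul_measure_univ_of_smul_restrict_le_conv (hnonneg : ∀ᵐ x ∂μ, 0 ≤ x)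
    (hheavy : IsHeavyTailed μ) {r : ℝ≥0} {x₀ : ℝ}
    (hconv : (r : ℝ≥0∞) • μ.restrict (Ioi x₀) ≤ μ ∗ μ) : r ≤ 2 * μ univ := by
  refine ENNReal.le_of_forall_pos_le_add fun ε hε _ => ?_
  have hμ_lt : μ univ < μ univ + ε / 2 :=
    ENNReal.lt_add_right (measure_ne_top μ univ) (by simpa using hε.ne')
  calc (r : ℝ≥0∞) ≤ 2 * (μ univ + ε / 2) :=
        le_two_mul_of_measure_univ_lt hnonneg hheavy hconv hμ_lt (by finiteness)
    _ = 2 * μ univ + ε := by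
        rw [mul_add, ENNReal.mul_div_cancel two_ne_zero ENNReal.ofNat_ne_top]

end HeavyTailed

section Tail

variable {F : Measure ℝ}

lemma antitone_tail (F : Measure ℝ) : Antitone (tail F) :=
  fun _ _ hxy => measure_mono (Ioi_subset_Ioi hxy)

@[fun_prop]
lemma measurable_tail (F : Measure ℝ) : Measurable (tail F) := (antitone_tail F).measurable

lemma IsHeavyTailed.tail_ne_zero [IsFiniteMeasure F] (hheavy : IsHeavyTailed F) (x : ℝ) :
    tail F x ≠ 0 := by
  intro hx
  have h_le : ∀ᵐ y ∂F, y ≤ x := by simpa only [ae_iff, not_le, tail, Ioi_def] using hx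
  have h_phi : phi F 1 ≤ ENNReal.ofReal (exp x) * F univ := by
    rw [← lintegral_const]
    exact lintegral_mono_ae (h_le.mono fun y hy => by rw [one_mul]; gcongr)
  rw [hheavy 1 one_pos] at h_phi
  exact (ENNReal.mul_lt_top ENNReal.ofReal_lt_top (measure_lt_top F univ)).not_ge h_phi

lemma integratedTail_univ (F : Measure ℝ) :
    integratedTail F univ = ∫⁻ y in Ioi 0, tail F y := by
  rw [integratedTail, withDensity_apply _ .univ, Measure.restrict_univ]

lemma ae_integratedTail_nonneg (F : Measure ℝ) : ∀ᵐ x ∂integratedTail F, 0 ≤ x :=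
  (withDensity_absolutelyContinuous _ _).ae_le
    ((ae_restrict_mem measurableSet_Ioi).mono fun _ hx => le_of_lt hx)

lemma phi_integratedTail (F : Measure ℝ) (γ : ℝ) :
    phi (integratedTail F) γ = ∫⁻ x in Ioi 0, tail F x * ENNReal.ofReal (exp (γ * x)) := by
  rw [phi, integratedTail,
    lintegral_withDensity_eq_lintegral_mul _ (by fun_prop) (by fun_prop)]
  rfl

lemma phi_le_measure_univ_add_phi_integratedTail {γ : ℝ} (hγ : 0 < γ) :
    phi F γ ≤ F univ + ENNReal.ofReal γ * phi (integratedTail F) γ := by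
  have h_exp (x : ℝ) : ∫ t in (0:ℝ)..x, γ * exp (γ * t) = exp (γ * x) - 1 := by
    simp [intervalIntegral.mul_integral_comp_mul_left]
  have h_layercake : ∫⁻ x, ENNReal.ofReal (exp (γ * max x 0) - 1) ∂F =
      ENNReal.ofReal γ * phi (integratedTail F) γ := by
    simp_rw [← h_exp]
    rw [lintegral_comp_eq_lintegral_meas_lt_mul F (.of_forall fun x => le_max_right x 0)
      (by fun_prop) (fun t _ => Continuous.intervalIntegrable (by fun_prop) _ _)
      (.of_forall fun t => by positivity), phi_integratedTail,
      ← lintegral_const_mul _ (by fun_prop)]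
    refine setLIntegral_congr_fun measurableSet_Ioi fun t (ht : 0 < t) => ?_
    simp only [lt_max_iff, ht.not_gt, or_false, ENNReal.ofReal_mul hγ.le]
    exact mul_left_comm _ _ _
  calc phi F γ ≤ ∫⁻ x, 1 + ENNReal.ofReal (exp (γ * max x 0) - 1) ∂F := by
        refine lintegral_mono fun x => ?_
        have h_one_le : 1 ≤ exp (γ * max x 0) := one_le_exp (by positivity)
        rw [← ENNReal.ofReal_one, ← ENNReal.ofReal_add zero_le_one (sub_nonneg.2 h_one_le),
          add_sub_cancel]
        gcongr
        exact le_max_left x 0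
    _ = F univ + ENNReal.ofReal γ * phi (integratedTail F) γ := by
        rw [lintegral_add_left measurable_const, lintegral_one, h_layercake]

lemma isHeavyTailed_integratedTail [IsFiniteMeasure F] (hheavy : IsHeavyTailed F) :
    IsHeavyTailed (integratedTail F) := by
  intro γ hγ
  by_contra h_ne_top
  have h_phi_lt : phi F γ < ⊤ :=
    (phi_le_measure_univ_add_phi_integratedTail hγ).trans_lt (by finiteness)
  exact h_phi_lt.ne (hheavy γ hγ)

lemma integratedTail_conv_self (F : Measure ℝ) :
    integratedTail F ∗ integratedTail F = volume.withDensity (tailConv F) := by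
  have h_meas : Measurable ((Ioi 0).indicator (tail F)) :=
    (measurable_tail F).indicator measurableSet_Ioi
  rw [integratedTail, ← withDensity_indicator measurableSet_Ioi,
    conv_withDensity_eq_lconvolution h_meas h_meas]
  congr 1 with x
  rw [lconvolution_def, tailConv, setLIntegral_congr Ioo_ae_eq_Ioc.symm,
    ← lintegral_indicator measurableSet_Ioo]
  refine lintegral_congr fun y => ?_
  have h_mem : y ∈ Ioo 0 x ↔ y ∈ Ioi 0 ∧ -y + x ∈ Ioi 0 := by
    simp only [mem_Ioo, mem_Ioi, lt_neg_add_iff_add_lt, add_zero]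
  by_cases hy : y ∈ Ioi 0 <;> simp [indicator, h_mem, hy, mul_comm, neg_add_eq_sub]

lemma smul_restrict_integratedTail_le_conv {r : ℝ≥0∞} {x₀ : ℝ}
    (h : ∀ x > x₀, r * tail F x ≤ tailConv F x) :
    r • (integratedTail F).restrict (Ioi x₀) ≤ integratedTail F ∗ integratedTail F := by
  rw [integratedTail_conv_self, integratedTail, restrict_withDensity measurableSet_Ioi,
    Measure.restrict_restrict measurableSet_Ioi, ← withDensity_smul r (measurable_tail F),
    ← withDensity_indicator (measurableSet_Ioi.inter measurableSet_Ioi)]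
  exact withDensity_mono (.of_forall (indicator_le fun x hx => h x hx.1))

lemma tailConv_eq_two_mul (F : Measure ℝ) (x : ℝ) :
    tailConv F x = 2 * ∫⁻ y in Ioc 0 (x / 2), tail F (x - y) * tail F y := by
  have h_reflect : ∫⁻ y in Ioc (x / 2) x, tail F (x - y) * tail F y =
      ∫⁻ y in Ioc 0 (x / 2), tail F (x - y) * tail F y := by
    have h_preimage : (fun y => x - y) ⁻¹' Ico 0 (x / 2) = Ioc (x / 2) x := by
      rw [preimage_const_sub_Ico, sub_zero, sub_half]
    rw [← setLIntegral_congr (Ico_ae_eq_Ioc (a := (0 : ℝ))), ← h_preimage,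
      ← (Measure.measurePreserving_sub_left volume x).setLIntegral_comp_preimage measurableSet_Ico
        (by fun_prop)]
    simp only [sub_sub_cancel, mul_comm]
  rcases le_or_gt x 0 with hx | hx
  · simp [tailConv, Ioc_eq_empty_of_le hx, Ioc_eq_empty_of_le (show x / 2 ≤ 0 by linarith)]
  · rw [tailConv, ← Ioc_union_Ioc_eq_Ioc (half_pos hx).le (half_le_self hx.le),
      lintegral_union measurableSet_Ioc (Ioc_disjoint_Ioc_of_le le_rfl), h_reflect, two_mul]

lemma two_mul_integratedTail_Iic_mul_tail_le_tailConv (F : Measure ℝ) (x : ℝ) :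
    2 * integratedTail F (Iic (x / 2)) * tail F x ≤ tailConv F x := by
  rw [tailConv_eq_two_mul, mul_assoc, integratedTail, withDensity_apply _ measurableSet_Iic,
    Measure.restrict_restrict measurableSet_Iic, inter_comm, Ioi_inter_Iic,
    ← lintegral_mul_const _ (measurable_tail F)]
  gcongr 2 * ?_
  refine setLIntegral_mono (by fun_prop) fun y hy => ?_
  rw [mul_comm]
  gcongr
  exact antitone_tail F (sub_le_self x hy.1.le)

section Liminf

variable [IsFiniteMeasure F]

lemma two_mul_integratedTail_univ_le_liminf (htail : ∀ x, tail F x ≠ 0) :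
    2 * integratedTail F univ ≤ liminf (fun x => tailConv F x / tail F x) atTop := by
  have h_tendsto : Tendsto (fun x : ℝ => 2 * integratedTail F (Iic (x / 2))) atTop
      (𝓝 (2 * integratedTail F univ)) :=
    ENNReal.Tendsto.const_mul ((tendsto_measure_Iic_atTop _).comp
      (tendsto_id.atTop_div_const two_pos)) (.inr ENNReal.ofNat_ne_top)
  rw [← h_tendsto.liminf_eq]
  refine liminf_le_liminf (.of_forall fun x => ?_)
  rw [ENNReal.le_div_iff_mul_le (.inl (htail x)) (.inl (measure_ne_top F _))]
  exact two_mul_integratedTail_Iic_mul_tail_le_tailConv F x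

lemma liminf_le_two_mul_integratedTail_univ (hheavy : IsHeavyTailed F) :
    liminf (fun x => tailConv F x / tail F x) atTop ≤ 2 * integratedTail F univ := by
  rcases eq_or_ne (integratedTail F univ) ⊤ with h_top | h_ne_top
  · simp [h_top]
  have : IsFiniteMeasure (integratedTail F) := ⟨h_ne_top.lt_top⟩
  refine ENNReal.le_of_forall_nnreal_lt fun r hr => ?_
  obtain ⟨x₀, hx₀⟩ := eventually_atTop.1 (eventually_lt_of_lt_liminf hr)
  exact le_two_mul_measure_univ_of_smul_restrict_le_conv (ae_integratedTail_nonneg F)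
    (isHeavyTailed_integratedTail hheavy) <| smul_restrict_integratedTail_le_conv fun x hx =>
      ENNReal.mul_le_of_le_div (hx₀ x (le_of_lt hx)).le

theorem liminf_tailConv_div_tail (hheavy : IsHeavyTailed F) :
    liminf (fun x => tailConv F x / tail F x) atTop = 2 * ∫⁻ y in Ioi 0, tail F y := by
  rw [← integratedTail_univ]
  exact (liminf_le_two_mul_integratedTail_univ hheavy).antisymm
    (two_mul_integratedTail_univ_le_liminf hheavy.tail_ne_zero)

end Liminf

end Tail

theorem stmt12_general {F : Measure ℝ} [IsFiniteMeasure F] (hheavy : IsHeavyTailed F)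
    {c : ℝ≥0∞} (hc : c ≠ ⊤) (h : Tendsto (fun x => tailConv F x / tail F x) atTop (𝓝 c)) :
    (∫⁻ y in Ioi 0, tail F y) ≠ ⊤ ∧
      Tendsto (fun x => tailConv F x / tail F x) atTop (𝓝 (2 * ∫⁻ y in Ioi 0, tail F y)) := by
  have hc_eq : c = 2 * ∫⁻ y in Ioi 0, tail F y := by
    rw [← liminf_tailConv_div_tail hheavy, h.liminf_eq]
  refine ⟨fun h_top => hc ?_, hc_eq ▸ h⟩
  rw [hc_eq, h_top, ENNReal.mul_top two_ne_zero]

/-- Theorem 5: if F is heavy-tailed and ∫_0^x F̄(x−y)F̄(y)dy ~ cF̄(x)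
for some c ∈ (0,∞), then F has finite mean a and F ∈ S*, i.e. c = 2a. -/
theorem stmt12 (F : MeasureTheory.Measure ℝ) [MeasureTheory.IsProbabilityMeasure F]
    (hsupp : F (Set.Iio 0) = 0) (hub : ∀ x : ℝ, tail F x ≠ 0)
    (hheavy : IsHeavyTailed F)
    (c : ℝ) (hc : 0 < c)
    (h : Tendsto (fun x : ℝ =>
        (∫⁻ y in Set.Ioc (0:ℝ) x, tail F (x - y) * tail F y) / tail F x) atTop
      (𝓝 (ENNReal.ofReal c))) :
    (∫⁻ y in Set.Ioi (0:ℝ), tail F y) ≠ ⊤ ∧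
      Tendsto (fun x : ℝ =>
          (∫⁻ y in Set.Ioc (0:ℝ) x, tail F (x - y) * tail F y) / tail F x) atTop
        (𝓝 (2 * ∫⁻ y in Set.Ioi (0:ℝ), tail F y)) := by
  exact stmt12_general hheavy ENNReal.ofReal_ne_top h
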